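/- arXiv:2303.06166 — 2 statements merged into one kernel-verified Lean document; each statement's English description precedes it below -/
import Mathlib

section
/- Let M' → M be an injective homomorphism of finitely presented torsion O_K-modules, and suppose given isomorphisms M ≅ ⊕_{j=1}^{m} O_K/a_jO_K and M' ≅ ⊕_{j=1}^{m'} O_K/b_jO_K for some m, m' ∈ ℕ and nonzero elements a_1, …, a_m, b_1, …, b_{m'} ∈ O_K with v(a_1) ≥ … ≥ v(a_m) and v(b_1) ≥ … ≥ v(b_{m'}). Then v(b_j) ≤ v(a_j) for all 1 ≤ j ≤ min{m, m'}, and if m' > m then v(b_j) = 0 (i.e. b_j is a unit of O_K) for all m < j ≤ m'. -/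
/-!
STATEMENT 3 (Lemma 4.7): if `M' → M` is an injective homomorphism of finitely presented torsion
`O_K`-modules, with `M ≅ ⊕_{j=1}^m O_K/a_j` and `M' ≅ ⊕_{j=1}^{m'} O_K/b_j` (valuations in
decreasing order), then `v(b_j) ≤ v(a_j)` for `j ≤ min{m, m'}`, and `v(b_j) = 0` for `m < j ≤ m'`.
-/

/-!
Over a ring `R` in which divisibility is total, Gaussian elimination, pivoting on an entry that
divides the others in its column, shows that more than `n` vectors in `Rⁿ` satisfy a linear relation
in which some coefficient is `1`.
Let `c ∈ R`, and let `n` be the number of factors `R ⧸ I k` of the target not killed by `c`. If `c`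
failed to kill more than `n` factors of the source, such a relation between the images of their
generators, taken in those `n` target factors, would give an `x` with `c • f x = 0` and with some
coordinate equal to `1` in a factor not killed by `c`, contradicting injectivity. So at most `n`
factors of the source survive `c`; taking `c = a j`, respectively `c = 1`, gives the theorem.
-/

section PreValuationRing

open scoped Finset

theorem exists_mem_forall_dvd {R α : Type*} [Monoid R] [PreValuationRing R] {s : Finset α}
    (hs : s.Nonempty) (u : α → R) : ∃ p ∈ s, ∀ i ∈ s, u p ∣ u i := by
  induction hs using Finset.Nonempty.cons_induction with
  | singleton a => exact ⟨a, by simp⟩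
  | cons a s _ _ ih =>
    obtain ⟨p, hp, hdvd⟩ := ih
    rcases ValuationRing.dvd_total (u p) (u a) with h | h
    · exact ⟨p, by simp [hp], by simpa [h] using hdvd⟩
    · exact ⟨a, by simp, by simpa using fun i hi ↦ h.trans (hdvd i hi)⟩

variable {R : Type*} [CommRing R] [PreValuationRing R]

theorem exists_relation_with_coeff_one {α β : Type*} (t : Finset β) {s : Finset α}
    (hcard : #t < #s) (u : α → β → R) :
    ∃ r : α → R, (∃ i ∈ s, r i = 1) ∧ ∀ k ∈ t, ∑ i ∈ s, r i * u i k = 0 := by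
  classical
  induction t using Finset.induction_on generalizing s u with
  | empty =>
    obtain ⟨i, hi⟩ := Finset.card_pos.mp hcard
    exact ⟨1, ⟨i, hi, rfl⟩, by simp⟩
  | insert k t hk ih =>
    obtain ⟨p, hp, hdvd⟩ :=
      exists_mem_forall_dvd (Finset.card_pos.mp (Nat.zero_lt_of_lt hcard)) (u · k)
    choose! q hq using hdvd
    have hcard' : #t < #(s.erase p) := by
      rw [Finset.card_insert_of_notMem hk] at hcard
      rw [Finset.card_erase_of_mem hp]
      lia
    obtain ⟨r, ⟨i, hi, hri⟩, hr⟩ := ih hcard' fun i l ↦ u i l - q i * u p l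
    let r' := Function.update r p (-∑ i ∈ s.erase p, r i * q i)
    have r'_of_mem {i : α} (hi : i ∈ s.erase p) : r' i = r i :=
      Function.update_of_ne (Finset.ne_of_mem_erase hi) _ _
    have sum_eq (l : β) :
        ∑ i ∈ s, r' i * u i l = ∑ i ∈ s.erase p, r i * (u i l - q i * u p l) := by
      rw [← Finset.add_sum_erase _ _ hp, Finset.sum_congr rfl fun i hi ↦ by rw [r'_of_mem hi]]
      simp only [r', Function.update_self, neg_mul, Finset.sum_mul, mul_sub,
        Finset.sum_sub_distrib, mul_assoc]
      ring
    refine ⟨r', ⟨i, Finset.mem_of_mem_erase hi, (r'_of_mem hi).trans hri⟩, fun l hl ↦ ?_⟩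
    rw [sum_eq]
    rcases Finset.mem_insert.mp hl with rfl | hl
    · refine Finset.sum_eq_zero fun i hi ↦ ?_
      rw [hq i (Finset.mem_of_mem_erase hi)]
      ring
    · exact hr l hl

theorem card_notMem_le_of_injective_pi_quotient {ι κ : Type*} [Fintype ι] [Fintype κ]
    {I : κ → Ideal R} {J : ι → Ideal R} {f : (∀ i, R ⧸ J i) →ₗ[R] ∀ k, R ⧸ I k}
    (hf : Function.Injective f) (c : R) [DecidablePred fun i ↦ c ∉ J i]
    [DecidablePred fun k ↦ c ∉ I k] : #{i | c ∉ J i} ≤ #{k | c ∉ I k} := by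
  classical
  by_contra! hcard
  choose L hL using fun i k ↦ Ideal.Quotient.mk_surjective (f (Pi.single i 1) k)
  obtain ⟨r, ⟨i, hi, hri⟩, hr⟩ := exists_relation_with_coeff_one _ hcard L
  let x : ∀ i, R ⧸ J i := ∑ i with c ∉ J i, r i • Pi.single i 1
  have f_x (k : κ) : f x k = Ideal.Quotient.mk (I k) (∑ i with c ∉ J i, r i * L i k) := by
    simp only [x, map_sum, map_smul, Finset.sum_apply, Pi.smul_apply]
    simp only [Algebra.smul_def, Ideal.Quotient.algebraMap_eq, map_mul, hL]
  have x_i : x i = 1 := by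
    simp only [x, Finset.sum_apply, Pi.smul_apply]
    rw [Finset.sum_eq_single_of_mem i hi fun j _ hj ↦ by rw [Pi.single_eq_of_ne' hj, smul_zero],
      hri, one_smul, Pi.single_eq_same]
  have c_smul_f_x : c • f x = 0 := by
    funext k
    rw [Pi.smul_apply, f_x, Pi.zero_apply]
    by_cases hk : c ∈ I k
    · exact Ideal.Quotient.eq_zero_iff_mem.mpr ((I k).mul_mem_right _ hk)
    · rw [hr k (by simpa using hk), map_zero, smul_zero]
  have c_smul_x : c • x = 0 := hf (by rw [map_smul, c_smul_f_x, map_zero])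
  have c_mem : c ∈ J i := by
    have c_smul_x_i : c • x i = 0 := congrFun c_smul_x i
    rwa [x_i, Algebra.smul_def, mul_one, Ideal.Quotient.algebraMap_eq,
      Ideal.Quotient.eq_zero_iff_mem] at c_smul_x_i
  exact (Finset.mem_filter.mp hi).2 c_mem

variable {m n : ℕ} {I : Fin m → Ideal R} {J : Fin n → Ideal R}
  {f : (∀ i, R ⧸ J i) →ₗ[R] ∀ k, R ⧸ I k}

theorem mem_of_injective_pi_quotient (hJ : Monotone J) (hf : Function.Injective f) {c : R}
    (i : Fin n) (hc : ∀ k : Fin m, (i : ℕ) ≤ k → c ∈ I k) : c ∈ J i := by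
  classical
  by_contra hi
  have source_card : (i : ℕ) + 1 ≤ #{j | c ∉ J j} := by
    rw [← Fin.card_Iic]
    exact Finset.card_le_card fun j hj ↦
      Finset.mem_filter.mpr ⟨Finset.mem_univ j, fun h ↦ hi (hJ (Finset.mem_Iic.mp hj) h)⟩
  have target_card : #{k | c ∉ I k} ≤ i := by
    rw [← Finset.card_range i]
    refine Finset.card_le_card_of_injOn Fin.val (fun k hk ↦ ?_) Fin.val_injective.injOn
    simpa using mt (hc k) (Finset.mem_filter.mp hk).2
  have := card_notMem_le_of_injective_pi_quotient hf c
  lia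

theorem le_of_injective_pi_quotient (hI : Monotone I) (hJ : Monotone J)
    (hf : Function.Injective f) {j : ℕ} (hm : j < m) (hn : j < n) : I ⟨j, hm⟩ ≤ J ⟨j, hn⟩ :=
  fun _ hc ↦ mem_of_injective_pi_quotient hJ hf ⟨j, hn⟩ fun _ hk ↦ hI hk hc

theorem eq_top_of_injective_pi_quotient (hJ : Monotone J) (hf : Function.Injective f) (j : Fin n)
    (hj : m ≤ j) : J j = ⊤ :=
  (Ideal.eq_top_iff_one _).mpr <|
    mem_of_injective_pi_quotient hJ hf j fun k hk ↦ absurd k.2 (hj.trans hk).not_gt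

end PreValuationRing

section Valuation

variable {K Γ : Type*} [Field K] [AddCommGroup Γ] [PartialOrder Γ] [IsOrderedAddMonoid Γ]
  {v : K → Γ} {A : ValuationSubring K}

theorem dvd_iff_apply_le (hv_mul : ∀ x y : K, x ≠ 0 → y ≠ 0 → v (x * y) = v x + v y)
    (hA : ∀ x : K, x ≠ 0 → (x ∈ A ↔ 0 ≤ v x)) {x y : A} (hx : x ≠ 0) (hy : y ≠ 0) :
    x ∣ y ↔ v x ≤ v y := by
  have hx' : (x : K) ≠ 0 := by simpa using hx
  have hquot : (y / x : K) ≠ 0 := div_ne_zero (by simpa using hy) hx'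
  have v_y : v y = v x + v (y / x) := by rw [← hv_mul _ _ hx' hquot, mul_div_cancel₀ _ hx']
  rw [v_y, le_add_iff_nonneg_right, ← hA _ hquot]
  constructor
  · rintro ⟨z, rfl⟩
    simp [hx']
  · exact fun hmem ↦ ⟨⟨y / x, hmem⟩, Subtype.ext (mul_div_cancel₀ _ hx').symm⟩

theorem apply_eq_zero_of_isUnit (hv_mul : ∀ x y : K, x ≠ 0 → y ≠ 0 → v (x * y) = v x + v y)
    (hA : ∀ x : K, x ≠ 0 → (x ∈ A ↔ 0 ≤ v x)) {x : A} (hx : IsUnit x) : v x = 0 := by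
  have v_one : v (1 : A) = 0 := by simpa using hv_mul 1 1 one_ne_zero one_ne_zero
  rw [← v_one]
  exact le_antisymm ((dvd_iff_apply_le hv_mul hA hx.ne_zero one_ne_zero).mp hx.dvd)
    ((dvd_iff_apply_le hv_mul hA one_ne_zero hx.ne_zero).mp (one_dvd x))

theorem monotone_span_singleton (hv_mul : ∀ x y : K, x ≠ 0 → y ≠ 0 → v (x * y) = v x + v y)
    (hA : ∀ x : K, x ≠ 0 → (x ∈ A ↔ 0 ≤ v x)) {ι : Type*} [Preorder ι] {a : ι → A}
    (ha0 : ∀ j, a j ≠ 0) (ha : ∀ i j, i ≤ j → v (a j) ≤ v (a i)) :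
    Monotone fun j ↦ Ideal.span {a j} := fun i j hij ↦
  Ideal.span_singleton_le_span_singleton.mpr <|
    (dvd_iff_apply_le hv_mul hA (ha0 j) (ha0 i)).mpr (ha i j hij)

end Valuation

theorem statement3_general {K Γ : Type*} [Field K] [AddCommGroup Γ] [PartialOrder Γ]
    [IsOrderedAddMonoid Γ] (v : K → Γ)
    (hv_mul : ∀ x y : K, x ≠ 0 → y ≠ 0 → v (x * y) = v x + v y)
    (A : ValuationSubring K) (hA : ∀ x : K, x ≠ 0 → (x ∈ A ↔ 0 ≤ v x))
    {M M' : Type*} [AddCommGroup M] [Module A M] [AddCommGroup M'] [Module A M']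
    (f : M' →ₗ[A] M) (hf : Function.Injective f)
    {m m' : ℕ} (a : Fin m → A) (b : Fin m' → A)
    (ha0 : ∀ j, a j ≠ 0) (hb0 : ∀ j, b j ≠ 0)
    (ha : ∀ i j : Fin m, i ≤ j → v (a j) ≤ v (a i))
    (hb : ∀ i j : Fin m', i ≤ j → v (b j) ≤ v (b i))
    (eM : M ≃ₗ[A] ((j : Fin m) → A ⧸ Ideal.span {a j}))
    (eM' : M' ≃ₗ[A] ((j : Fin m') → A ⧸ Ideal.span {b j})) :
    (∀ (j : ℕ) (hm : j < m) (hm' : j < m'), v (b ⟨j, hm'⟩) ≤ v (a ⟨j, hm⟩)) ∧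
      ∀ j : Fin m', m ≤ (j : ℕ) → v (b j) = 0 := by
  have span_a_mono := monotone_span_singleton hv_mul hA ha0 ha
  have span_b_mono := monotone_span_singleton hv_mul hA hb0 hb
  have g_inj : Function.Injective (eM.toLinearMap ∘ₗ f ∘ₗ eM'.symm.toLinearMap) :=
    eM.injective.comp (hf.comp eM'.symm.injective)
  refine ⟨fun j hm hm' ↦ ?_, fun j hj ↦ ?_⟩
  · rw [← dvd_iff_apply_le hv_mul hA (hb0 _) (ha0 _), ← Ideal.span_singleton_le_span_singleton]
    exact le_of_injective_pi_quotient span_a_mono span_b_mono g_inj hm hm'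
  · apply apply_eq_zero_of_isUnit hv_mul hA
    rw [← Ideal.span_singleton_eq_top]
    exact eq_top_of_injective_pi_quotient span_b_mono g_inj j hj

theorem statement3
    -- the complete rank-one valued field `(K, v)` extending `ℚ_p`, with valuation ring `O_K = A`
    {p : ℕ} [Fact p.Prime] {K : Type*} [Field K] [Algebra ℚ_[p] K]
    (v : K → ℝ)
    (hv_mul : ∀ x y : K, x ≠ 0 → y ≠ 0 → v (x * y) = v x + v y)
    (hv_add : ∀ x y : K, x ≠ 0 → y ≠ 0 → x + y ≠ 0 → min (v x) (v y) ≤ v (x + y))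
    (hv_p : v (p : K) = 1)
    (A : ValuationSubring K)
    (hA : ∀ x : K, x ≠ 0 → (x ∈ A ↔ 0 ≤ v x))
    -- an injective homomorphism `M' → M` of (finitely presented, torsion) `O_K`-modules
    {M M' : Type*} [AddCommGroup M] [Module A M] [AddCommGroup M'] [Module A M']
    (f : M' →ₗ[A] M) (hf : Function.Injective f)
    -- the given presentations, with nonzero elementary divisors of decreasing valuation
    {m m' : ℕ} (a : Fin m → A) (b : Fin m' → A)
    (ha0 : ∀ j, a j ≠ 0) (hb0 : ∀ j, b j ≠ 0)
    (ha : ∀ i j : Fin m, i ≤ j → v (a j : K) ≤ v (a i : K))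
    (hb : ∀ i j : Fin m', i ≤ j → v (b j : K) ≤ v (b i : K))
    (eM : M ≃ₗ[A] ((j : Fin m) → A ⧸ Ideal.span {a j}))
    (eM' : M' ≃ₗ[A] ((j : Fin m') → A ⧸ Ideal.span {b j})) :
    (∀ (j : ℕ) (hm : j < m) (hm' : j < m'),
        v ((b ⟨j, hm'⟩ : A) : K) ≤ v ((a ⟨j, hm⟩ : A) : K)) ∧
      ∀ j : Fin m', m ≤ (j : ℕ) → v ((b j : A) : K) = 0 :=
  statement3_general v hv_mul A hA f hf a b ha0 hb0 ha hb eM eM'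
end

section
/- Let M be a finitely generated free O_K-module equipped with a ℤ_p-algebra homomorphism ι : O_F → End_{O_K}(M), and suppose given an isomorphism M/ι(π)(M) ≅ ⊕_{j=1}^{n} O_K/a_jO_K for some n ∈ ℕ and nonzero elements a_1, …, a_n ∈ O_K with v(a_1) ≥ … ≥ v(a_n). Then: (a) ∑_{j=1}^{n} v(a_j) = (1/e)·rk_{O_K}(M) = (1/e)·∑_τ r_τ; and (b) for every 0 ≤ i ≤ n, ∑_{j=1}^{i} v(a_j) ≤ (1/e)·∑_τ min{i, r_τ}, where both sums over τ run over all ℚ_p-algebra embeddings τ : F → K. -/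
/-!
STATEMENT 6 (Theorem 4.8, module-theoretic form): with `M/ι(π)M ≅ ⊕_{j=1}^n O_K/a_j`
(decreasing valuations), (a) `∑_j v(a_j) = rk(M)/e = (∑_τ r_τ)/e`, and
(b) `∑_{j ≤ i} v(a_j) ≤ (1/e)·∑_τ min{i, r_τ}` for all `0 ≤ i ≤ n`.
-/

open scoped TensorProduct

/-- The eigenspace `M_{K,τ} = {w ∈ M ⊗_{O_K} K | ι(a) w = τ(a) • w for all a ∈ O_F}`. -/
noncomputable def eigenspaceOF {p : ℕ} [Fact p.Prime] {K : Type*} [Field K] [Algebra ℚ_[p] K]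
    (A : ValuationSubring K) {F : Type*} [Field F] [Algebra ℚ_[p] F] (OF : Subring F)
    {M : Type*} [AddCommGroup M] [Module A M] (ι : OF →+* Module.End A M)
    (τ : F →ₐ[ℚ_[p]] K) : Submodule K (K ⊗[A] M) :=
  ⨅ a : OF, LinearMap.ker ((ι a).baseChange K - τ (a : F) • LinearMap.id)

/-!
The idea is to compare determinants. If `f` is an endomorphism of a finite free module whose
cokernel surjects onto `∏ j, A ⧸ (a j)`, then `∏ j, a j` divides `det f`, with equality up to a unit
when the surjection is an isomorphism. Since `π ^ e` is `p` times a unit, `f = ι π` satisfies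
`f ^ e M = p M`, so `det f ^ e` is associated to `p ^ rank M`, which is (a).

For (b), let `S` be a set of indices, lift the projection `M → ∏ j ∈ S, A ⧸ (a j)` to
`φ : M → A ^ S`, and divide `M` by its intersection with the sum of the subspaces
`M_{K,τ} ⊓ ker φ`. The quotient is free, `f` acts on it with the same relation `f ^ e M = p M`, its
cokernel still surjects onto `∏ j ∈ S, A ⧸ (a j)`, and its rank is at most `∑ τ, min #S r_τ`,
because `φ` embeds `M_{K,τ} ⧸ (M_{K,τ} ⊓ ker φ)` into `K ^ S`. Comparing determinants on the
quotient gives the bound.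
-/

section Determinants

variable {A M N Q : Type*} [CommRing A] [AddCommGroup M] [Module A M] [AddCommGroup N] [Module A N]
  [AddCommGroup Q] [Module A Q]

theorem det_dvd_det_of_range_le [Module.Projective A M] {f g : M →ₗ[A] M}
    (h : f.range ≤ g.range) : g.det ∣ f.det := by
  obtain ⟨k, hk⟩ := Module.projective_lifting_property g.rangeRestrict
    (f.codRestrict g.range fun m ↦ h (f.mem_range_self m)) g.surjective_rangeRestrict
  have hgk : g ∘ₗ k = f := LinearMap.ext fun m ↦ congrArg Subtype.val (LinearMap.congr_fun hk m)
  exact ⟨k.det, by rw [← LinearMap.det_comp, hgk]⟩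

/-- A form of Schanuel's lemma. -/
theorem exists_prod_linearEquiv_of_surjective [Module.Projective A M] [Module.Projective A N]
    {p : M →ₗ[A] Q} {q : N →ₗ[A] Q} (hp : Function.Surjective p) (hq : Function.Surjective q) :
    ∃ θ : (M × N) ≃ₗ[A] (M × N), ∀ x, q (θ x).2 = p x.1 := by
  obtain ⟨α, hα⟩ := Module.projective_lifting_property q p hq
  obtain ⟨β, hβ⟩ := Module.projective_lifting_property p q hp
  have hα' (m : M) : q (α m) = p m := LinearMap.congr_fun hα m
  have hβ' (n : N) : p (β n) = q n := LinearMap.congr_fun hβ n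
  refine ⟨.prodComm A M N ≪≫ₗ .skewProd (.refl A N) (.refl A M) (-β) ≪≫ₗ .prodComm A N M ≪≫ₗ
    .skewProd (.refl A M) (.refl A N) α, fun x ↦ ?_⟩
  simp [hα', hβ']

variable [Module.Free A M] [Module.Finite A M] [Module.Free A N] [Module.Finite A N]

theorem det_dvd_det_of_exact {f : M →ₗ[A] M} {g : N →ₗ[A] N} {p : M →ₗ[A] Q} {q : N →ₗ[A] Q}
    (hp : Function.Surjective p) (hq : Function.Surjective q) (hpf : p ∘ₗ f = 0)
    (hgq : Function.Exact g q) : g.det ∣ f.det := by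
  obtain ⟨θ, hθ⟩ := exists_prod_linearEquiv_of_surjective hp hq
  have hrange : (θ.toLinearMap ∘ₗ f.prodMap .id).range ≤ (LinearMap.id.prodMap g).range := by
    rintro _ ⟨x, rfl⟩
    have hx : q (θ (f x.1, x.2)).2 = 0 := (hθ _).trans (LinearMap.congr_fun hpf x.1)
    obtain ⟨n, hn⟩ := (hgq _).1 hx
    exact ⟨((θ (f x.1, x.2)).1, n), Prod.ext rfl hn⟩
  have hdvd := det_dvd_det_of_range_le hrange
  rwa [LinearMap.det_comp, LinearMap.det_prodMap, LinearMap.det_prodMap, LinearMap.det_id,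
    LinearMap.det_id, one_mul, mul_one, θ.isUnit_det'.dvd_mul_left] at hdvd

section CyclicQuotients

variable {J : Type*} (a : J → A)

/-- The diagonal endomorphism of `A ^ J` with entries `a`. -/
def diagonalEnd : (J → A) →ₗ[A] (J → A) :=
  LinearMap.pi fun j ↦ (a j • LinearMap.id).comp (LinearMap.proj j)

/-- The canonical projection of `A ^ J` onto a product of cyclic modules, the cokernel of
`diagonalEnd a`. -/
def cyclicProj : (J → A) →ₗ[A] (j : J) → A ⧸ Ideal.span {a j} :=
  LinearMap.pi fun j ↦ (Submodule.mkQ (Ideal.span {a j})).comp (LinearMap.proj j)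

theorem cyclicProj_surjective : Function.Surjective (cyclicProj a) := by
  intro y
  choose x hx using fun j ↦ Submodule.mkQ_surjective (Ideal.span {a j}) (y j)
  exact ⟨x, funext hx⟩

theorem exact_diagonalEnd_cyclicProj : Function.Exact (diagonalEnd a) (cyclicProj a) := by
  intro x
  have hdvd : cyclicProj a x = 0 ↔ ∀ j, ∃ y, x j = a j * y := by
    simp only [funext_iff, cyclicProj, LinearMap.pi_apply, LinearMap.comp_apply,
      LinearMap.proj_apply, Pi.zero_apply, Submodule.mkQ_apply, Submodule.Quotient.mk_eq_zero,
      Ideal.mem_span_singleton, dvd_def]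
  rw [hdvd, Classical.skolem]
  exact exists_congr fun y ↦ funext_iff.symm.trans eq_comm

theorem det_diagonalEnd [Fintype J] : (diagonalEnd a).det = ∏ j, a j := by
  simp [diagonalEnd, LinearMap.det_pi]

variable [Fintype J] {a} {f : M →ₗ[A] M} {q : M →ₗ[A] (j : J) → A ⧸ Ideal.span {a j}}

theorem prod_dvd_det (hq : Function.Surjective q) (hqf : q ∘ₗ f = 0) : ∏ j, a j ∣ f.det := by
  rw [← det_diagonalEnd]
  exact det_dvd_det_of_exact hq (cyclicProj_surjective a) hqf (exact_diagonalEnd_cyclicProj a)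

theorem det_dvd_prod (hq : Function.Surjective q) (hfq : Function.Exact f q) :
    f.det ∣ ∏ j, a j := by
  rw [← det_diagonalEnd]
  exact det_dvd_det_of_exact (cyclicProj_surjective a) hq
    (exact_diagonalEnd_cyclicProj a).linearMap_comp_eq_zero hfq

end CyclicQuotients

end Determinants

section Weights

variable {A : Type*} [CommRing A]

/-- The part of the notion of a real valuation that controls divisibility: additive on products and
nonnegative. The value at `0`, where a valuation would be infinite, is unconstrained. -/
structure IsDivisibilityWeight (w : A → ℝ) : Prop where
  map_mul : ∀ {x y : A}, x ≠ 0 → y ≠ 0 → w (x * y) = w x + w y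
  nonneg : ∀ {x : A}, x ≠ 0 → 0 ≤ w x

namespace IsDivisibilityWeight

variable {w : A → ℝ}

theorem le_of_dvd (hw : IsDivisibilityWeight w) {x y : A} (hxy : x ∣ y) (hy : y ≠ 0) :
    w x ≤ w y := by
  obtain ⟨z, rfl⟩ := hxy
  rw [hw.map_mul (left_ne_zero_of_mul hy) (right_ne_zero_of_mul hy)]
  exact le_add_of_nonneg_right (hw.nonneg (right_ne_zero_of_mul hy))

theorem eq_of_associated (hw : IsDivisibilityWeight w) {x y : A} (hxy : Associated x y)
    (hy : y ≠ 0) : w x = w y :=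
  (hw.le_of_dvd hxy.dvd hy).antisymm (hw.le_of_dvd hxy.symm.dvd (hxy.ne_zero_iff.2 hy))

theorem map_one [Nontrivial A] (hw : IsDivisibilityWeight w) : w 1 = 0 := by
  simpa using hw.map_mul (one_ne_zero (α := A)) one_ne_zero

variable [IsDomain A]

theorem map_prod (hw : IsDivisibilityWeight w) {J : Type*} (s : Finset J) {a : J → A}
    (ha : ∀ j ∈ s, a j ≠ 0) : w (∏ j ∈ s, a j) = ∑ j ∈ s, w (a j) := by
  induction s using Finset.cons_induction with
  | empty => simpa using hw.map_one
  | cons j s hj ih =>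
    have hs : ∀ i ∈ s, a i ≠ 0 := fun i hi ↦ ha i (Finset.mem_cons_of_mem hi)
    rw [Finset.prod_cons, Finset.sum_cons,
      hw.map_mul (ha j (Finset.mem_cons_self j s)) (Finset.prod_ne_zero_iff.2 hs), ih hs]

theorem map_pow (hw : IsDivisibilityWeight w) {x : A} (hx : x ≠ 0) (n : ℕ) :
    w (x ^ n) = n * w x := by
  simpa using hw.map_prod (Finset.range n) fun _ _ ↦ hx

end IsDivisibilityWeight

end Weights

section SlopeOfEndomorphism

variable {A M : Type*} [CommRing A] [IsDomain A] [AddCommGroup M] [Module A M] [Module.Free A M]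
  {f : Module.End A M} {e : ℕ} {ϖ : A}

theorem associated_det_pow_of_range_pow_eq
    (hf : (f ^ e).range = (ϖ • (1 : Module.End A M)).range) :
    Associated (f.det ^ e) (ϖ ^ Module.finrank A M) := by
  have hsmul : (ϖ • (1 : Module.End A M)).det = ϖ ^ Module.finrank A M := by
    rw [LinearMap.det_smul, map_one, mul_one]
  rw [← map_pow, ← hsmul]
  exact associated_of_dvd_dvd (det_dvd_det_of_range_le hf.ge) (det_dvd_det_of_range_le hf.le)

theorem det_ne_zero_of_range_pow_eq (he : 0 < e) (hϖ : ϖ ≠ 0)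
    (hf : (f ^ e).range = (ϖ • (1 : Module.End A M)).range) : f.det ≠ 0 :=
  (pow_ne_zero_iff he.ne').1
    ((associated_det_pow_of_range_pow_eq hf).ne_zero_iff.2 (pow_ne_zero _ hϖ))

theorem IsDivisibilityWeight.map_det {w : A → ℝ} (hw : IsDivisibilityWeight w) (he : 0 < e)
    (hϖ : ϖ ≠ 0) (hf : (f ^ e).range = (ϖ • (1 : Module.End A M)).range) :
    w f.det = Module.finrank A M * w ϖ / e := by
  have hdet := hw.eq_of_associated (associated_det_pow_of_range_pow_eq hf) (pow_ne_zero _ hϖ)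
  rw [hw.map_pow (det_ne_zero_of_range_pow_eq he hϖ hf), hw.map_pow hϖ] at hdet
  rw [eq_div_iff (by positivity), mul_comm, hdet]

theorem sum_weight_eq [Module.Finite A M] {w : A → ℝ} {J : Type*} [Fintype J] {a : J → A}
    (hw : IsDivisibilityWeight w) (hϖ : ϖ ≠ 0) (he : 0 < e)
    (hf : (f ^ e).range = (ϖ • (1 : Module.End A M)).range)
    {q : M →ₗ[A] (j : J) → A ⧸ Ideal.span {a j}} (hq : Function.Surjective q)
    (hfq : Function.Exact f q) : ∑ j, w (a j) = Module.finrank A M * w ϖ / e := by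
  have hassoc : Associated (∏ j, a j) f.det :=
    associated_of_dvd_dvd (prod_dvd_det hq hfq.linearMap_comp_eq_zero) (det_dvd_prod hq hfq)
  have hdet := det_ne_zero_of_range_pow_eq he hϖ hf
  have ha := Finset.prod_ne_zero_iff.1 (hassoc.ne_zero_iff.2 hdet)
  rw [← hw.map_prod Finset.univ ha, hw.eq_of_associated hassoc hdet, hw.map_det he hϖ hf]

end SlopeOfEndomorphism

theorem range_mapQ_pow_eq {A M : Type*} [CommRing A] [AddCommGroup M] [Module A M]
    {f : Module.End A M} {e : ℕ} {ϖ : A} (hf : (f ^ e).range = (ϖ • (1 : Module.End A M)).range)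
    {N : Submodule A M} (hN : N ≤ N.comap f) :
    (N.mapQ N f hN ^ e).range = (ϖ • (1 : Module.End A (M ⧸ N))).range := by
  have hϖN : N ≤ N.comap (ϖ • (1 : Module.End A M)) := fun m hm ↦ N.smul_mem ϖ hm
  have hmapQ : N.mapQ N (ϖ • (1 : Module.End A M)) hϖN = ϖ • 1 := by
    ext m
    rfl
  rw [← hmapQ, ← N.mapQ_pow hN e (N.le_comap_pow_of_le_comap hN e), Submodule.range_mapQ,
    Submodule.range_mapQ, hf]

section Dimensions

variable {K E E' T : Type*} [Field K] [AddCommGroup E] [Module K E] [FiniteDimensional K E]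
  [AddCommGroup E'] [Module K E'] [FiniteDimensional K E'] [Fintype T]

theorem finrank_iSup_eq_sum_of_iSupIndep {V : T → Submodule K E}
    (hV : iSupIndep V) :
    Module.finrank K (⨆ t, V t : Submodule K E) = ∑ t, Module.finrank K (V t) := by
  classical
  have h := (LinearEquiv.ofInjective _ hV.dfinsupp_lsum_injective).finrank_eq
  rw [← Submodule.iSup_eq_range_dfinsupp_lsum] at h
  exact h.symm.trans (Module.finrank_directSum (R := K) fun t ↦ V t)

theorem finrank_le_finrank_inf_ker_add_min (U : Submodule K E) (g : E →ₗ[K] E') :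
    Module.finrank K U ≤ Module.finrank K (U ⊓ LinearMap.ker g : Submodule K E) +
      min (Module.finrank K E') (Module.finrank K U) := by
  have hnullity := (g.domRestrict U).finrank_range_add_finrank_ker
  have hker : Module.finrank K (g.domRestrict U).ker
      = Module.finrank K (U ⊓ LinearMap.ker g : Submodule K E) := by
    rw [LinearMap.ker_domRestrict, ← Submodule.map_comap_subtype]
    exact (Submodule.equivSubtypeMap _ _).finrank_eq
  have hrange := Submodule.finrank_le (g.domRestrict U).range
  omega

theorem finrank_quotient_iSup_inf_ker_le {V : T → Submodule K E} (hV : iSupIndep V)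
    (hV_top : ⨆ t, V t = ⊤) (g : E →ₗ[K] E') :
    Module.finrank K (E ⧸ ⨆ t, V t ⊓ LinearMap.ker g) ≤
      ∑ t, min (Module.finrank K E') (Module.finrank K (V t)) := by
  have hquot := (⨆ t, V t ⊓ LinearMap.ker g).finrank_quotient_add_finrank
  have hE : Module.finrank K E = ∑ t, Module.finrank K (V t) := by
    rw [← finrank_iSup_eq_sum_of_iSupIndep hV, hV_top, finrank_top]
  have hsum := Finset.sum_le_sum fun t (_ : t ∈ Finset.univ) ↦
    finrank_le_finrank_inf_ker_add_min (V t) g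
  rw [Finset.sum_add_distrib,
    ← finrank_iSup_eq_sum_of_iSupIndep (hV.mono fun t ↦ inf_le_left)] at hsum
  omega

end Dimensions

theorem finrank_le_finrank_of_injective_of_isFractionRing {A K P E : Type*} [CommRing A] [Field K]
    [Algebra A K] [IsFractionRing A K] [AddCommGroup P] [Module A P] [AddCommGroup E] [Module K E]
    [Module A E] [IsScalarTower A K E] [FiniteDimensional K E] {i : P →ₗ[A] E}
    (hi : Function.Injective i) : Module.finrank A P ≤ Module.finrank K E := by
  have hrank : Module.rank K E = Module.rank A E := IsFractionRing.rank_right_eq A K E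
  rw [IsFractionRing.finrank_right_eq A K E]
  exact Module.finrank_le_finrank_of_rank_le_rank (LinearMap.lift_rank_le_of_injective i hi)
    (hrank ▸ Module.rank_lt_aleph0 K E)

theorem free_of_isTorsionFree_of_valuationRing {A P : Type*} [CommRing A] [IsDomain A]
    [ValuationRing A] [AddCommGroup P] [Module A P] [Module.Finite A P]
    [Module.IsTorsionFree A P] : Module.Free A P := by
  have : Module.Flat A P := by
    rwa [Module.Flat.flat_iff_torsion_eq_bot_of_isBezout,
      ← Submodule.isTorsionFree_iff_torsion_eq_bot]
  exact Module.free_of_flat_of_isLocalRing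

section Contraction

variable {A K M : Type*} [CommRing A] [Field K] [Algebra A K] [AddCommGroup M] [Module A M]

/-- The contraction `M ∩ W` to `M` of a subspace `W` of `K ⊗ M`. -/
def contraction (W : Submodule K (K ⊗[A] M)) : Submodule A M :=
  (W.restrictScalars A).comap (TensorProduct.mk A K M 1)

variable {W : Submodule K (K ⊗[A] M)}

theorem contraction_le_comap {f : Module.End A M} (hW : W ≤ W.comap (f.baseChange K)) :
    contraction W ≤ (contraction W).comap f :=
  fun _ hm ↦ hW hm

theorem contraction_le_ker [FaithfulSMul A K] {L : Type*} [AddCommGroup L] [Module A L]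
    [Module.Flat A L] {φ : M →ₗ[A] L} (hW : W ≤ LinearMap.ker (φ.baseChange K)) :
    contraction W ≤ LinearMap.ker φ := by
  intro m hm
  have hφm : (1 : K) ⊗ₜ[A] φ m = 0 := hW hm
  exact Module.Flat.tensorProduct_mk_injective A L K (hφm.trans (TensorProduct.tmul_zero L 1).symm)

variable (W) in
theorem exists_injective_quotient_contraction :
    ∃ i : (M ⧸ contraction W) →ₗ[A] (K ⊗[A] M) ⧸ W, Function.Injective i := by
  have hker : (W.mkQ.restrictScalars A ∘ₗ TensorProduct.mk A K M 1).ker = contraction W := by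
    ext m
    exact Submodule.Quotient.mk_eq_zero W
  exact ⟨(contraction W).liftQ _ hker.ge,
    LinearMap.ker_eq_bot.1 (Submodule.ker_liftQ_eq_bot _ _ _ hker.le)⟩

end Contraction

theorem iSup_inf_le_comap_of_le_eigenspace {K E T : Type*} [Field K] [AddCommGroup E] [Module K E]
    {f : Module.End K E} {V : T → Submodule K E} {c : T → K} (hc : ∀ t, V t ≤ f.eigenspace (c t))
    (U : Submodule K E) : ⨆ t, V t ⊓ U ≤ (⨆ t, V t ⊓ U).comap f := by
  refine iSup_le fun t x hx ↦ ?_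
  rw [Submodule.mem_comap, Module.End.mem_eigenspace_iff.1 (hc t hx.1)]
  exact Submodule.smul_mem _ _ (Submodule.mem_iSup_of_mem t hx)

theorem range_map_pow_eq_range_natCast_smul {A M R : Type*} [CommRing A] [AddCommGroup M]
    [Module A M] [Semiring R] (ι : R →+* Module.End A M) {x : R} {u : Rˣ} {e k : ℕ}
    (hx : x ^ e = k * u) :
    (ι x ^ e).range = ((k : A) • (1 : Module.End A M)).range := by
  have hu : (ι u).range = ⊤ :=
    LinearMap.range_eq_top.2 ((Module.End.isUnit_iff _).1 (u.isUnit.map ι)).2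
  have hk : (k : Module.End A M) = (k : A) • 1 := by rw [Nat.cast_smul_eq_nsmul, nsmul_one]
  rw [← map_pow, hx, map_mul, map_natCast, hk, Module.End.mul_eq_comp,
    LinearMap.range_comp_of_range_eq_top _ hu]

theorem eigenspaceOF_le_eigenspace {p : ℕ} [Fact p.Prime] {K : Type*} [Field K] [Algebra ℚ_[p] K]
    (A : ValuationSubring K) {F : Type*} [Field F] [Algebra ℚ_[p] F] {OF : Subring F}
    {M : Type*} [AddCommGroup M] [Module A M] (ι : OF →+* Module.End A M) (b : OF)
    (τ : F →ₐ[ℚ_[p]] K) :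
    eigenspaceOF A OF ι τ ≤ Module.End.eigenspace ((ι b).baseChange K) (τ b) := by
  rw [Module.End.eigenspace_def]
  exact iInf_le _ b

theorem isDivisibilityWeight_restrict {K : Type*} [Field K] {v : K → ℝ}
    (hv_mul : ∀ x y : K, x ≠ 0 → y ≠ 0 → v (x * y) = v x + v y) {A : Subring K}
    (hA : ∀ x : K, x ≠ 0 → x ∈ A → 0 ≤ v x) : IsDivisibilityWeight fun x : A ↦ v x where
  map_mul hx hy := hv_mul _ _ (mod_cast hx) (mod_cast hy)
  nonneg {x} hx := hA x (mod_cast hx) x.2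

section Main

variable {A K M T : Type*} [CommRing A] [IsDomain A] [ValuationRing A] [Field K] [Algebra A K]
  [IsFractionRing A K] [AddCommGroup M] [Module A M] [Module.Finite A M] [Fintype T]
  {f : Module.End A M} {V : T → Submodule K (K ⊗[A] M)} {c : T → K}

theorem exists_invariant_submodule_le_ker (hV : iSupIndep V) (hV_top : ⨆ t, V t = ⊤)
    (hc : ∀ t, V t ≤ Module.End.eigenspace (f.baseChange K) (c t)) {L : Type*} [AddCommGroup L]
    [Module A L] [Module.Free A L] [Module.Finite A L] (φ : M →ₗ[A] L) :
    ∃ N : Submodule A M, N ≤ N.comap f ∧ N ≤ LinearMap.ker φ ∧ Module.Free A (M ⧸ N) ∧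
      Module.finrank A (M ⧸ N) ≤ ∑ t, min (Module.finrank A L) (Module.finrank K (V t)) := by
  let W : Submodule K (K ⊗[A] M) := ⨆ t, V t ⊓ LinearMap.ker (φ.baseChange K)
  obtain ⟨i, hi⟩ := exists_injective_quotient_contraction W
  have : Module.IsTorsionFree A ((K ⊗[A] M) ⧸ W) := .trans_faithfulSMul A K _
  have : Module.IsTorsionFree A (M ⧸ contraction W) := hi.moduleIsTorsionFree i i.map_smul
  refine ⟨contraction W, contraction_le_comap (iSup_inf_le_comap_of_le_eigenspace hc _),
    contraction_le_ker (iSup_le fun t ↦ inf_le_right), free_of_isTorsionFree_of_valuationRing, ?_⟩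
  calc Module.finrank A (M ⧸ contraction W)
    _ ≤ Module.finrank K ((K ⊗[A] M) ⧸ W) :=
      finrank_le_finrank_of_injective_of_isFractionRing hi
    _ ≤ ∑ t, min (Module.finrank K (K ⊗[A] L)) (Module.finrank K (V t)) :=
      finrank_quotient_iSup_inf_ker_le hV hV_top (φ.baseChange K)
    _ = ∑ t, min (Module.finrank A L) (Module.finrank K (V t)) := by
      rw [Module.finrank_baseChange]

variable [Module.Free A M] {w : A → ℝ} {ϖ : A} {e : ℕ} {J : Type*} {a : J → A}

theorem sum_weight_le [Fintype J] (hw : IsDivisibilityWeight w) (hϖ : ϖ ≠ 0) (he : 0 < e)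
    (hf : (f ^ e).range = (ϖ • (1 : Module.End A M)).range)
    (hV : iSupIndep V) (hV_top : ⨆ t, V t = ⊤)
    (hc : ∀ t, V t ≤ Module.End.eigenspace (f.baseChange K) (c t))
    {q : M →ₗ[A] (j : J) → A ⧸ Ideal.span {a j}} (hq : Function.Surjective q)
    (hqf : q ∘ₗ f = 0) :
    ∑ j, w (a j) ≤ (∑ t, (min (Fintype.card J) (Module.finrank K (V t)) : ℕ)) * w ϖ / e := by
  obtain ⟨φ, hφ⟩ := Module.projective_lifting_property (cyclicProj a) q (cyclicProj_surjective a)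
  obtain ⟨N, hNf, hNφ, hfree, hrank⟩ := exists_invariant_submodule_le_ker hV hV_top hc φ
  have hNq : N ≤ LinearMap.ker q := hφ ▸ hNφ.trans (LinearMap.ker_le_ker_comp _ _)
  have hfN := range_mapQ_pow_eq hf hNf
  have hdvd : ∏ j, a j ∣ (N.mapQ N f hNf).det := by
    refine prod_dvd_det (q := N.liftQ q hNq) (fun y ↦ ?_) ?_
    · obtain ⟨m, hm⟩ := hq y
      exact ⟨N.mkQ m, hm⟩
    · ext : 1
      exact hqf
  have hdet := det_ne_zero_of_range_pow_eq he hϖ hfN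
  have ha := Finset.prod_ne_zero_iff.1 (ne_zero_of_dvd_ne_zero hdet hdvd)
  rw [Module.finrank_fintype_fun_eq_card] at hrank
  calc ∑ j, w (a j)
    _ = w (∏ j, a j) := (hw.map_prod Finset.univ ha).symm
    _ ≤ w (N.mapQ N f hNf).det := hw.le_of_dvd hdvd hdet
    _ = Module.finrank A (M ⧸ N) * w ϖ / e := hw.map_det he hϖ hfN
    _ ≤ _ := by
      have := hw.nonneg hϖ
      gcongr

theorem statement6_general [Fintype J] [DecidableEq T] (hw : IsDivisibilityWeight w) (hϖ : ϖ ≠ 0)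
    (he : 0 < e) (hf : (f ^ e).range = (ϖ • (1 : Module.End A M)).range)
    (hV : DirectSum.IsInternal V)
    (hc : ∀ t, V t ≤ Module.End.eigenspace (f.baseChange K) (c t))
    (φ : (M ⧸ f.range) ≃ₗ[A] ((j : J) → A ⧸ Ideal.span {a j})) :
    ∑ j, w (a j) = Module.finrank A M * w ϖ / e ∧
    ∑ j, w (a j) = (∑ t, (Module.finrank K (V t) : ℝ)) * w ϖ / e ∧
    ∀ S : Finset J, ∑ j ∈ S, w (a j) ≤
      (∑ t, ((min S.card (Module.finrank K (V t)) : ℕ) : ℝ)) * w ϖ / e := by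
  obtain ⟨hind, htop⟩ := (DirectSum.isInternal_submodule_iff_iSupIndep_and_iSup_eq_top V).1 hV
  let q : M →ₗ[A] (j : J) → A ⧸ Ideal.span {a j} := φ.toLinearMap ∘ₗ f.range.mkQ
  have hq : Function.Surjective q := φ.surjective.comp f.range.mkQ_surjective
  have hfq : Function.Exact f q := by
    rw [LinearMap.exact_iff, LinearEquiv.ker_comp, Submodule.ker_mkQ]
  have hsum := sum_weight_eq hw hϖ he hf hq hfq
  have hrank : Module.finrank A M = ∑ t, Module.finrank K (V t) := by
    rw [← Module.finrank_baseChange (R := K), ← finrank_top, ← htop,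
      finrank_iSup_eq_sum_of_iSupIndep hind]
  refine ⟨hsum, by rw [hsum, hrank, Nat.cast_sum], fun S ↦ ?_⟩
  let restr : ((j : J) → A ⧸ Ideal.span {a j}) →ₗ[A] (j : S) → A ⧸ Ideal.span {a j} :=
    LinearMap.pi fun j ↦ LinearMap.proj (j : J)
  have hrestr : Function.Surjective restr := Subtype.surjective_restrict (· ∈ S)
  have hle := sum_weight_le (q := restr ∘ₗ q) hw hϖ he hf hind htop hc (hrestr.comp hq)
    (by rw [LinearMap.comp_assoc, hfq.linearMap_comp_eq_zero, LinearMap.comp_zero])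
  simpa only [Finset.sum_coe_sort S fun j ↦ w (a j), Fintype.card_coe, Nat.cast_sum] using hle

end Main

theorem statement6
    -- the complete rank-one valued field `(K, v)` extending `ℚ_p`, with valuation ring `O_K = A`
    {p : ℕ} [Fact p.Prime] {K : Type*} [Field K] [Algebra ℚ_[p] K]
    (v : K → ℝ)
    (hv_mul : ∀ x y : K, x ≠ 0 → y ≠ 0 → v (x * y) = v x + v y)
    (hv_add : ∀ x y : K, x ≠ 0 → y ≠ 0 → x + y ≠ 0 → min (v x) (v y) ≤ v (x + y))
    (hv_p : v (p : K) = 1)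
    (A : ValuationSubring K)
    (hA : ∀ x : K, x ≠ 0 → (x ∈ A ↔ 0 ≤ v x))
    -- the finite extension `F` of `ℚ_p`, its ring of integers `O_F`, uniformiser `π`,
    -- ramification index `e`; `K` contains a Galois closure of `F|ℚ_p`
    {F : Type*} [Field F] [Algebra ℚ_[p] F] [FiniteDimensional ℚ_[p] F]
    [Fintype (F →ₐ[ℚ_[p]] K)] [DecidableEq (F →ₐ[ℚ_[p]] K)]
    (OF : Subring F) (π : OF) (e : ℕ) (he : 0 < e)
    (hπe : ∃ u : OFˣ, (π : F) ^ e = (p : F) * ((u : OF) : F))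
    (hτO : ∀ (τ : F →ₐ[ℚ_[p]] K) (x : OF), τ (x : F) ∈ A)
    (hτπ : ∀ τ : F →ₐ[ℚ_[p]] K, v (τ (π : F)) = 1 / e)
    -- the finitely generated free `O_K`-module `M` with `O_F`-action `ι`,
    -- and the eigenspace decomposition `M_K = ⊕_τ M_{K,τ}`
    {M : Type*} [AddCommGroup M] [Module A M] [Module.Free A M] [Module.Finite A M]
    (ι : OF →+* Module.End A M)
    (hdec : DirectSum.IsInternal (fun τ : F →ₐ[ℚ_[p]] K => eigenspaceOF A OF ι τ))
    -- the given isomorphism `M/ι(π)(M) ≅ ⊕_{j=1}^n O_K/a_jO_K`, decreasing valuations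
    {n : ℕ} (a : Fin n → A) (ha0 : ∀ j, a j ≠ 0)
    (ha : ∀ i j : Fin n, i ≤ j → v (a j : K) ≤ v (a i : K))
    (eq : (M ⧸ LinearMap.range (ι π)) ≃ₗ[A] ((j : Fin n) → A ⧸ Ideal.span {a j})) :
    -- (a) `∑_j v(a_j) = rk(M)/e = (∑_τ r_τ)/e`
    (∑ j, v ((a j : A) : K)) = (Module.finrank A M : ℝ) / e ∧
    (∑ j, v ((a j : A) : K))
      = (∑ τ : F →ₐ[ℚ_[p]] K, (Module.finrank K (eigenspaceOF A OF ι τ) : ℝ)) / e ∧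
    -- (b) for every `0 ≤ i ≤ n`, `∑_{j=1}^i v(a_j) ≤ (1/e)·∑_τ min{i, r_τ}`
    ∀ i : ℕ, i ≤ n →
      (∑ j ∈ Finset.univ.filter (fun j : Fin n => (j : ℕ) < i), v ((a j : A) : K))
        ≤ (∑ τ : F →ₐ[ℚ_[p]] K,
            ((min i (Module.finrank K (eigenspaceOF A OF ι τ)) : ℕ) : ℝ)) / e := by
  obtain ⟨u, hu⟩ := hπe
  have : CharZero K := charZero_of_injective_algebraMap (algebraMap ℚ_[p] K).injective
  have hw : IsDivisibilityWeight fun x : A ↦ v x :=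
    isDivisibilityWeight_restrict hv_mul (A := A.toSubring) fun x hx ↦ (hA x hx).1
  have hp : (p : A) ≠ 0 := mod_cast (Fact.out : p.Prime).ne_zero
  have hrange := range_map_pow_eq_range_natCast_smul (A := A) ι (x := π) (e := e) (u := u) (k := p)
    (mod_cast hu)
  have hvp : v ((p : A) : K) = 1 := hv_p
  have h := statement6_general hw hp he hrange hdec (eigenspaceOF_le_eigenspace A ι π) eq
  simp only [hvp, mul_one] at h
  refine ⟨h.1, h.2.1, fun i hi ↦ ?_⟩
  simpa only [Fin.card_filter_val_lt, min_eq_right hi] using h.2.2 {j | (j : ℕ) < i}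
end
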